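/- (Correctness of the UDDSketch merge, Theorem 1.) Let γ₀ > 1 be a real, let D₁ and D₂ be multisets of positive reals, and suppose the sketch of D₁ has been collapsed t₁ times and the sketch of D₂ has been collapsed t₂ times, so that they are sk_{γ₀^(2^{t₁})}(D₁) and sk_{γ₀^(2^{t₂})}(D₂) respectively. Then for every natural number t with t ≥ t₁ and t ≥ t₂, UC^[t−t₁](sk_{γ₀^(2^{t₁})}(D₁)) + UC^[t−t₂](sk_{γ₀^(2^{t₂})}(D₂)) = sk_{γ₀^(2^t)}(D₁ ⊎ D₂). That is, aligning the two sketches to a common base by further collapses and summing them pointwise produces exactly the sketch that would be obtained by processing the union D₁ ⊎ D₂ directly with base γ₀^(2^t). -/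

import Mathlib

/-!
Squaring the base halves logarithms, and `⌈y / 2⌉ = j` exactly when `⌈y⌉` is `2 * j - 1` or `2 * j`.
So a collapse merges precisely the pairs of buckets that become one bucket when the base is squared:
it sends the sketch of `D` at base `γ` to the sketch of `D` at base `γ ^ 2`. Hence both sketches,
once aligned, are sketches at the same base, where counting is additive in the multiset.
-/

/-- The γ-sketch of a multiset D of positive reals. -/
noncomputable def sk (γ : ℝ) (D : Multiset ℝ) : ℤ → ℕ :=
  fun k => (D.filter (fun x => ⌈Real.logb γ x⌉ = k)).card

/-- The uniform collapse operator. -/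
def UC (f : ℤ → ℕ) : ℤ → ℕ := fun j => f (2 * j - 1) + f (2 * j)

theorem logb_pow_base (b x : ℝ) (n : ℕ) : Real.logb (b ^ n) x = Real.logb b x / n := by
  rw [Real.logb, Real.logb, Real.log_pow, div_div, mul_comm]

theorem ceil_div_natCast_eq_iff {K : Type*} [Field K] [LinearOrder K] [IsStrictOrderedRing K]
    [FloorRing K] {n : ℕ} (hn : 0 < n) (y : K) (j : ℤ) :
    ⌈y / n⌉ = j ↔ n * (j - 1) < ⌈y⌉ ∧ ⌈y⌉ ≤ n * j := by
  have hn' : (0 : K) < n := Nat.cast_pos.2 hn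
  rw [Int.ceil_eq_iff, lt_div_iff₀' hn', div_le_iff₀' hn', Int.lt_ceil, Int.ceil_le]
  push_cast
  rfl

theorem ceil_div_two_eq_iff {K : Type*} [Field K] [LinearOrder K] [IsStrictOrderedRing K]
    [FloorRing K] (y : K) (j : ℤ) :
    ⌈y / 2⌉ = j ↔ ⌈y⌉ = 2 * j - 1 ∨ ⌈y⌉ = 2 * j := by
  have h := ceil_div_natCast_eq_iff two_pos y j
  push_cast at h
  rw [h]
  lia

theorem card_filter_or_of_disjoint {α : Type*} {p q : α → Prop} [DecidablePred p]
    [DecidablePred q] {s : Multiset α} (h : ∀ x ∈ s, p x → ¬q x) :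
    (s.filter fun x => p x ∨ q x).card = (s.filter p).card + (s.filter q).card := by
  have h_inter : s.filter (fun x => p x ∧ q x) = 0 :=
    Multiset.filter_eq_nil.2 fun x hx hpq => h x hx hpq.1 hpq.2
  rw [← Multiset.card_add, Multiset.filter_add_filter, h_inter, add_zero]

theorem sk_add (γ : ℝ) (D₁ D₂ : Multiset ℝ) : sk γ (D₁ + D₂) = sk γ D₁ + sk γ D₂ := by
  funext k
  simp only [sk, Pi.add_apply, Multiset.filter_add, Multiset.card_add]

theorem UC_sk (γ : ℝ) (D : Multiset ℝ) : UC (sk γ D) = sk (γ ^ 2) D := by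
  funext j
  have h_disjoint : ∀ x ∈ D, ⌈Real.logb γ x⌉ = 2 * j - 1 → ¬⌈Real.logb γ x⌉ = 2 * j := by
    lia
  simp only [UC, sk, logb_pow_base, Nat.cast_ofNat, ceil_div_two_eq_iff,
    card_filter_or_of_disjoint h_disjoint]

theorem UC_iterate_sk (γ : ℝ) (D : Multiset ℝ) (n : ℕ) :
    UC^[n] (sk γ D) = sk (γ ^ 2 ^ n) D := by
  induction n with
  | zero => rw [Function.iterate_zero_apply, pow_zero, pow_one]
  | succ n ih => rw [Function.iterate_succ_apply', ih, UC_sk, ← pow_mul, ← pow_succ]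

theorem UC_iterate_sub_sk (γ : ℝ) (D : Multiset ℝ) {s t : ℕ} (h : s ≤ t) :
    UC^[t - s] (sk (γ ^ 2 ^ s) D) = sk (γ ^ 2 ^ t) D := by
  rw [UC_iterate_sk, ← pow_mul, ← pow_add, Nat.add_sub_cancel' h]

/-- Correctness of the UDDSketch merge, Theorem 1: aligning
two sketches, collapsed t₁ and t₂ times respectively, to a common base
γ₀^(2^t) by further collapses and summing them pointwise produces exactly
the sketch of the multiset sum D₁ ⊎ D₂ at base γ₀^(2^t). -/
theorem merge_correctness (γ₀ : ℝ) (hγ : 1 < γ₀) (D₁ D₂ : Multiset ℝ)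
    (hpos₁ : ∀ x ∈ D₁, 0 < x) (hpos₂ : ∀ x ∈ D₂, 0 < x)
    (t₁ t₂ t : ℕ) (h₁ : t₁ ≤ t) (h₂ : t₂ ≤ t) :
    UC^[t - t₁] (sk (γ₀ ^ 2 ^ t₁) D₁) + UC^[t - t₂] (sk (γ₀ ^ 2 ^ t₂) D₂) =
      sk (γ₀ ^ 2 ^ t) (D₁ + D₂) := by
  rw [UC_iterate_sub_sk γ₀ D₁ h₁, UC_iterate_sub_sk γ₀ D₂ h₂, sk_add]
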